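/- arXiv:2108.08531 — 2 statements merged into one kernel-verified Lean document; each statement's English description precedes it below -/
import Mathlib

section
/- There exist three elements x, y, z in PSL(2,7) with o(x) = o(y) = 4, o(z) = 7, x·y·z = 1, and ⟨x, y, z⟩ = PSL(2,7). (Explicitly: x = (1,7,6,3)(2,8,5,4), y = (1,2,5,7)(3,8,6,4), z = (2,3,5,4,7,8,6).) -/
open Matrix

namespace Stmt11

abbrev G := SpecialLinearGroup (Fin 2) (ZMod 7)

instance : Fact (Nat.Prime 7) := ⟨by norm_num⟩

def T : G := ⟨!![1, 1; 0, 1], by decide⟩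
def S : G := ⟨!![0, -1; 1, 0], by decide⟩
def X : G := ⟨!![0, -1; 1, 3], by decide⟩
def Y : G := ⟨!![3, -2; -1, 1], by decide⟩

def U (t : ZMod 7) : G := ⟨!![1, t; 0, 1], by simp [Matrix.det_fin_two]⟩
def L (t : ZMod 7) : G := ⟨!![1, 0; t, 1], by simp [Matrix.det_fin_two]⟩

lemma U_eq : ∀ t : ZMod 7, U t = T ^ t.val := by decide
lemma L_eq : ∀ t : ZMod 7, L t = S * U (-t) * S⁻¹ := by decide
lemma S_eq : S = X * (T ^ 3)⁻¹ := by decide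

lemma mul_entry (A B : G) (i j : Fin 2) :
    (A * B) i j = A i 0 * B 0 j + A i 1 * B 1 j := by
  have h : (A * B) i j = ((A : Matrix (Fin 2) (Fin 2) (ZMod 7)) * B.val) i j := rfl
  rw [h, Matrix.mul_apply, Fin.sum_univ_two]

lemma decomp (g : G) (hc : g 1 0 ≠ 0) :
    g = U ((g 0 0 - 1) / g 1 0) * L (g 1 0) * U ((g 1 1 - 1) / g 1 0) := by
  have hd := g.det_coe
  rw [Matrix.det_fin_two] at hd
  ext i j
  erw [mul_entry, mul_entry, mul_entry]
  fin_cases i <;> fin_cases j <;>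
    simp [U, L, hc]
  · field_simp
    linear_combination -hd
  · rw [mul_div_cancel₀ _ hc, sub_add_cancel]

lemma mem_of (H : Subgroup G) (hX : X ∈ H) (hT : T ∈ H) (g : G) : g ∈ H := by
  have hS : S ∈ H := by
    rw [S_eq]; exact H.mul_mem hX (H.inv_mem (H.pow_mem hT 3))
  have hU (t) : U t ∈ H := by rw [U_eq]; exact H.pow_mem hT _
  have hL (t) : L t ∈ H := by
    rw [L_eq]; exact H.mul_mem (H.mul_mem hS (hU _)) (H.inv_mem hS)
  have key (g : G) (hc : g 1 0 ≠ 0) : g ∈ H := by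
    rw [decomp g hc]; exact H.mul_mem (H.mul_mem (hU _) (hL _)) (hU _)
  by_cases hc : g 1 0 = 0
  · rw [← H.mul_mem_cancel_right hS]
    apply key
    have hd := g.det_coe
    rw [Matrix.det_fin_two, hc] at hd
    erw [mul_entry]
    simp [S]
    intro h
    simp [h] at hd
  · exact key g hc

lemma not_central (A B : G) (h : B * A ≠ A * B) : A ∉ Subgroup.center G :=
  fun hA => h (Subgroup.mem_center_iff.1 hA B)

lemma neg_one_central : (-1 : G) ∈ Subgroup.center G :=
  Subgroup.mem_center_iff.2 fun g => by simp

lemma order_four (A B : G) (h4 : A ^ 4 = -1) (h2 : B * A ^ 2 ≠ A ^ 2 * B) :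
    orderOf (QuotientGroup.mk A : G ⧸ Subgroup.center G) = 4 := by
  have := orderOf_eq_prime_pow (p := 2) (n := 1)
    (x := (QuotientGroup.mk A : G ⧸ Subgroup.center G)) ?_ ?_
  · simpa using this
  · rw [← QuotientGroup.mk_pow, QuotientGroup.eq_one_iff]
    exact not_central _ B h2
  · rw [← QuotientGroup.mk_pow, QuotientGroup.eq_one_iff]
    norm_num [h4, neg_one_central]

end Stmt11

open Stmt11 in
theorem stmt11 : ∃ x y z : ProjectiveSpecialLinearGroup (Fin 2) (ZMod 7),
    orderOf x = 4 ∧ orderOf y = 4 ∧ orderOf z = 7 ∧ x * y * z = 1 ∧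
      Subgroup.closure
        ({x, y, z} : Set (ProjectiveSpecialLinearGroup (Fin 2) (ZMod 7))) = ⊤ := by
  refine ⟨(QuotientGroup.mk X : G ⧸ Subgroup.center G), (QuotientGroup.mk Y : G ⧸ Subgroup.center G),
    (QuotientGroup.mk T : G ⧸ Subgroup.center G), order_four X T (by decide) (by decide),
    order_four Y T (by decide) (by decide), ?_, ?_, ?_⟩
  · apply orderOf_eq_prime
    · exact (congrArg (QuotientGroup.mk (s := Subgroup.center G)) (show T ^ 7 = 1 by decide))
    · intro h
      exact not_central T S (by decide) ((QuotientGroup.eq_one_iff T).1 h)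
  · exact (congrArg (QuotientGroup.mk (s := Subgroup.center G)) (show X * Y * T = 1 by decide))
  · rw [eq_top_iff]
    rintro q -
    obtain ⟨g, rfl⟩ := QuotientGroup.mk_surjective q
    exact mem_of (Subgroup.comap (QuotientGroup.mk' (Subgroup.center G)) (Subgroup.closure _))
      (Subgroup.subset_closure (by left; rfl)) (Subgroup.subset_closure (by right; right; rfl)) g
end

section
/- There exist three elements a, b, c in PSL(3,4) of orders 5, 5, 7 respectively with a·b·c = 1 and ⟨a, b, c⟩ = PSL(3,4). (Explicitly, realized as permutations of the 21 points of the projective plane over F₄: a = (1,21,18,19,20)(2,9,12,6,5)(3,17,15,4,13)(7,14,10,16,8), b = (2,13,15,8,18)(3,12,16,7,19)(4,11,14,9,20)(5,10,17,6,21), c = (1,20,2,21,12,13,5)(3,18,16,9,7,10,6)(4,19,8,17,14,11,15).) -/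
open Matrix

namespace PSL34

/-- Arithmetic of the field with four elements `0, 1, w, v = w + 1`. -/
structure Table {F : Type*} [Field F] (w v : F) : Prop where
  oo : (1 : F) + 1 = 0
  ow : 1 + w = v
  wo : w + 1 = v
  ov : 1 + v = w
  vo : v + 1 = w
  wwa : w + w = 0
  vva : v + v = 0
  wva : w + v = 1
  vwa : v + w = 1
  ww : w * w = v
  wv : w * v = 1
  vw : v * w = 1
  vv : v * v = w

theorem mk_table {F : Type*} [Field F] {w : F} (h2 : (2 : F) = 0) (hw : w ^ 2 = w + 1) :
    Table w (w + 1) := by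
  constructor <;> grind

section
variable {F : Type*} [Field F] {w v : F}

def ma (w : F) : Matrix (Fin 3) (Fin 3) F := !![w, 0, 1; 0, 1, 0; 1, w, 0]
def mb (w : F) : Matrix (Fin 3) (Fin 3) F := !![1, 0, 0; 0, 0, 1; 0, 1, w]
def mia (w v : F) : Matrix (Fin 3) (Fin 3) F := !![0, w, 1; 0, 1, 0; 1, v, w]
def mib (w : F) : Matrix (Fin 3) (Fin 3) F := !![1, 0, 0; 0, w, 1; 0, 1, 0]

theorem mul3 (a b c d e f g h i az bz cz dz ez fz gz hz iz : F) :
    !![a, b, c; d, e, f; g, h, i] * !![az, bz, cz; dz, ez, fz; gz, hz, iz] =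
    !![a * az + b * dz + c * gz, a * bz + b * ez + c * hz, a * cz + b * fz + c * iz;
       d * az + e * dz + f * gz, d * bz + e * ez + f * hz, d * cz + e * fz + f * iz;
       g * az + h * dz + i * gz, g * bz + h * ez + i * hz, g * cz + h * fz + i * iz] := by
  ext x y
  fin_cases x <;> fin_cases y <;> simp [Matrix.mul_apply, Fin.sum_univ_three]

theorem relations (T : Table w v) :
    ma w * mia w v = 1 ∧ mb w * mib w = 1 ∧ ma w ^ 5 = 1 ∧ mb w ^ 5 = 1 ∧
    (ma w * mb w) ^ 7 = 1 ∧
    ma w * mb w = !![w, 1, w; 0, 0, 1; 1, 0, w] ∧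
    ma w * mib w * ma w * mib w * mia w v * mb w = !![1, 1, 0; 0, 1, 0; 0, 0, 1] ∧
    mib w * mia w v * mib w * ma w * mb w * mia w v * mb w * mb w =
      !![1, 0, 0; 0, 1, 1; 0, 0, 1] ∧
    mb w * mia w v * mb w * mia w v * mib w * ma w = !![1, 0, 0; 0, 1, 0; 1, 0, 1] ∧
    ma w * ma w * mib w * ma w * mb w * mb w * mia w v * mb w * ma w =
      !![1, v, 0; 0, 1, 0; 0, 0, 1] := by
  obtain ⟨h1, h2, h3, h4, h5, h6, h7, h8, h9, h10, h11, h12, h13⟩ := T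
  simp only [ma, mb, mia, mib, pow_succ, pow_zero, one_mul, Matrix.one_fin_three, mul3,
    mul_one, mul_zero, zero_mul, add_zero, zero_add,
    h1, h2, h3, h4, h5, h6, h7, h8, h9, h10, h11, h12, and_self]

theorem det_ma (T : Table w v) : (ma w).det = 1 := by
  have := T.ww; have := T.oo; have := T.wo; have := T.wwa
  simp [ma, Matrix.det_fin_three]; try grind

theorem det_mb (T : Table w v) : (mb w).det = 1 := by
  have := T.oo
  simp [mb, Matrix.det_fin_three]; try grind

theorem det_mia (T : Table w v) : (mia w v).det = 1 := by
  have := T.oo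
  simp [mia, Matrix.det_fin_three]; try grind

theorem det_mib (T : Table w v) : (mib w).det = 1 := by
  have := T.oo
  simp [mib, Matrix.det_fin_three]; try grind

/-- Commutators of elementary transvections. -/
theorem comm_transvection {i j k : Fin 3} (hij : i ≠ j) (hjk : j ≠ k) (hik : i ≠ k) (s t : F) :
    Matrix.SpecialLinearGroup.transvection hij s * Matrix.SpecialLinearGroup.transvection hjk t *
    Matrix.SpecialLinearGroup.transvection hij (-s) * Matrix.SpecialLinearGroup.transvection hjk (-t) =
    Matrix.SpecialLinearGroup.transvection hik (s * t) := by
  apply Subtype.ext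
  change (1 + single i j s) * (1 + single j k t) * (1 + single i j (-s)) *
    (1 + single j k (-t)) = 1 + single i k (s * t)
  simp [mul_add, add_mul, hij.symm, hjk.symm, hik.symm, single_neg]
  have e : ∀ (p q : Fin 3) (x : F), single p q (-x) = - single p q x := by
    intro p q x; ext; simp [Matrix.single_apply]; grind
  simp only [e]
  abel

theorem diag2n_eq {i j : Fin 3} (hij : i ≠ j) (c : F) (hc : c ≠ 0) :
    Matrix.SpecialLinearGroup.diag2n hij c hc =
    Matrix.SpecialLinearGroup.transvection hij c * Matrix.SpecialLinearGroup.transvection hij.symm (-c⁻¹) *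
    Matrix.SpecialLinearGroup.transvection hij c * (Matrix.SpecialLinearGroup.transvection hij (-1) *
    Matrix.SpecialLinearGroup.transvection hij.symm 1 * Matrix.SpecialLinearGroup.transvection hij (-1)) := by
  apply Subtype.ext
  rw [Matrix.SpecialLinearGroup.diag2n_coe]
  change _ = (1 + single i j c) * (1 + single j i (-c⁻¹)) * (1 + single i j c) *
    ((1 + single i j (-1)) * (1 + single j i 1) * (1 + single i j (-1)))
  simp [mul_add, add_mul, hij, hij.symm, hc, single_neg]
  ext x y
  by_cases hxy : x = y
  · subst hxy
    by_cases h1 : x = i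
    · subst h1; simp [hij, hij.symm, Matrix.single_apply]
    · by_cases h3 : x = j
      · subst h3; simp [hij, hij.symm, Matrix.single_apply]
      · simp [h1, h3, Ne.symm h1, Ne.symm h3, Matrix.single_apply]
  · simp [hxy, Matrix.single_apply]
    grind

theorem top_of_transvections (K : Subgroup (SpecialLinearGroup (Fin 3) F))
    (h : ∀ (i j : Fin 3) (hij : i ≠ j) (c : F), Matrix.SpecialLinearGroup.transvection hij c ∈ K) :
    K = ⊤ := by
  rw [eq_top_iff]
  intro M _
  induction M using Matrix.SpecialLinearGroup.diagonal_transvection_induction' with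
  | hdiag i j hij hc =>
    rw [diag2n_eq]
    exact K.mul_mem (K.mul_mem (K.mul_mem (h ..) (h ..)) (h ..))
      (K.mul_mem (K.mul_mem (h ..) (h ..)) (h ..))
  | htransvec i j hij a => exact h ..
  | hmul A B hA hB => exact K.mul_mem (hA trivial) (hB trivial)

theorem top_of_four (T : Table w v) (hF : ∀ x : F, x = 0 ∨ x = 1 ∨ x = w ∨ x = v)
    (K : Subgroup (SpecialLinearGroup (Fin 3) F))
    (h01 : Matrix.SpecialLinearGroup.transvection (i := (0 : Fin 3)) (j := 1) (by decide) (1 : F) ∈ K)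
    (h12 : Matrix.SpecialLinearGroup.transvection (i := (1 : Fin 3)) (j := 2) (by decide) (1 : F) ∈ K)
    (h20 : Matrix.SpecialLinearGroup.transvection (i := (2 : Fin 3)) (j := 0) (by decide) (1 : F) ∈ K)
    (hv : Matrix.SpecialLinearGroup.transvection (i := (0 : Fin 3)) (j := 1) (by decide) v ∈ K) :
    K = ⊤ := by
  have key : ∀ {i j k : Fin 3} (hij : i ≠ j) (hjk : j ≠ k) (hik : i ≠ k) (s t : F),
      Matrix.SpecialLinearGroup.transvection hij s ∈ K → Matrix.SpecialLinearGroup.transvection hjk t ∈ K →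
      Matrix.SpecialLinearGroup.transvection hik (s * t) ∈ K := by
    intro i j k hij hjk hik s t hs ht
    rw [← comm_transvection hij hjk hik, ← Matrix.SpecialLinearGroup.transvection_inv,
      ← Matrix.SpecialLinearGroup.transvection_inv]
    exact K.mul_mem (K.mul_mem (K.mul_mem hs ht) (K.inv_mem hs)) (K.inv_mem ht)
  have h02 := key _ _ (by decide) _ _ h01 h12
  have h10 := key _ _ (by decide) _ _ h12 h20
  have h21 := key _ _ (by decide) _ _ h20 h01
  have v02 := key _ _ (by decide) _ _ hv h12
  have v21 := key _ _ (by decide) _ _ h20 hv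
  have v12 := key _ _ (by decide) _ _ h10 v02
  have v20 := key _ _ (by decide) _ _ v21 h10
  have v10 := key _ _ (by decide) _ _ v12 h20
  simp only [mul_one, one_mul] at h02 h10 h21 v02 v21 v12 v20 v10
  have hone : ∀ (i j : Fin 3) (hij : i ≠ j), Matrix.SpecialLinearGroup.transvection hij (1 : F) ∈ K := by
    intro i j hij
    fin_cases i <;> fin_cases j <;> first | assumption | exact absurd rfl hij
  have hvv : ∀ (i j : Fin 3) (hij : i ≠ j), Matrix.SpecialLinearGroup.transvection hij v ∈ K := by
    intro i j hij
    fin_cases i <;> fin_cases j <;> first | assumption | exact absurd rfl hij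
  apply top_of_transvections
  intro i j hij c
  rcases hF c with rfl | rfl | rfl | rfl
  · rw [Matrix.SpecialLinearGroup.transvection_coeff_zero]; exact K.one_mem
  · exact hone ..
  · rw [← T.ov, Matrix.SpecialLinearGroup.transvection_add]
    exact K.mul_mem (hone ..) (hvv ..)
  · exact hvv ..

theorem order_of_quot {p : ℕ} [Fact p.Prime] (g : SpecialLinearGroup (Fin 3) F)
    (hg : g ^ p = 1) (i j : Fin 3) (hij : i ≠ j) (hne : g.1 i j ≠ 0) :
    orderOf (QuotientGroup.mk g : ProjectiveSpecialLinearGroup (Fin 3) F) = p := by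
  apply orderOf_eq_prime
  · rw [← QuotientGroup.mk_pow, hg, QuotientGroup.mk_one]
  · intro h
    rw [QuotientGroup.eq_one_iff, Matrix.SpecialLinearGroup.mem_center_iff] at h
    obtain ⟨r, _, hr⟩ := h
    apply hne
    rw [← hr]
    simp [hij]

theorem main (T : Table w v) (hF : ∀ x : F, x = 0 ∨ x = 1 ∨ x = w ∨ x = v) :
    ∃ a b c : ProjectiveSpecialLinearGroup (Fin 3) F,
    orderOf a = 5 ∧ orderOf b = 5 ∧ orderOf c = 7 ∧ a * b * c = 1 ∧
      Subgroup.closure ({a, b, c} : Set (ProjectiveSpecialLinearGroup (Fin 3) F)) = ⊤ := by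
  obtain ⟨ra, rb, ra5, rb5, rab7, rab, w0, w1, w2, w3⟩ := relations T
  let a : SpecialLinearGroup (Fin 3) F := ⟨ma w, det_ma T⟩
  let b : SpecialLinearGroup (Fin 3) F := ⟨mb w, det_mb T⟩
  let az : SpecialLinearGroup (Fin 3) F := ⟨mia w v, det_mia T⟩
  let bz : SpecialLinearGroup (Fin 3) F := ⟨mib w, det_mib T⟩
  have haa : a * az = 1 := Subtype.ext ra
  have hbb : b * bz = 1 := Subtype.ext rb
  have ha5 : a ^ 5 = 1 := Subtype.ext ((Matrix.SpecialLinearGroup.coe_pow a 5).trans ra5)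
  have hb5 : b ^ 5 = 1 := Subtype.ext ((Matrix.SpecialLinearGroup.coe_pow b 5).trans rb5)
  have hab7 : (a * b) ^ 7 = 1 := Subtype.ext ((Matrix.SpecialLinearGroup.coe_pow (a * b) 7).trans rab7)
  have : Fact (Nat.Prime 5) := ⟨by norm_num⟩
  have : Fact (Nat.Prime 7) := ⟨by norm_num⟩
  refine ⟨QuotientGroup.mk a, QuotientGroup.mk b, (QuotientGroup.mk (a * b))⁻¹, ?_, ?_, ?_, ?_, ?_⟩
  · exact order_of_quot a ha5 0 2 (by decide) (by simp [a, ma])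
  · exact order_of_quot b hb5 1 2 (by decide) (by simp [b, mb])
  · rw [orderOf_inv]
    refine order_of_quot (a * b) hab7 0 1 (by decide) ?_
    rw [show (a * b).1 = _ from rab]; simp
  · rw [← QuotientGroup.mk_mul, mul_inv_cancel]
  · generalize hc : (QuotientGroup.mk (a * b) : ProjectiveSpecialLinearGroup (Fin 3) F)⁻¹ = c
    set H := Subgroup.closure ({QuotientGroup.mk a, QuotientGroup.mk b, c} :
      Set (ProjectiveSpecialLinearGroup (Fin 3) F)) with hH
    let K := H.comap (QuotientGroup.mk' (Subgroup.center (SpecialLinearGroup (Fin 3) F)))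
    have hK : K = ⊤ := by
      have ka : a ∈ K := Subgroup.subset_closure (by simp)
      have kb : b ∈ K := Subgroup.subset_closure (by simp)
      have kaz : az ∈ K := by rw [← inv_eq_of_mul_eq_one_right haa]; exact K.inv_mem ka
      have kbz : bz ∈ K := by rw [← inv_eq_of_mul_eq_one_right hbb]; exact K.inv_mem kb
      have tr : ∀ (g : SpecialLinearGroup (Fin 3) F) (M : Matrix (Fin 3) (Fin 3) F) (i j : Fin 3)
          (hij : i ≠ j) (x : F), g ∈ K → g.1 = M → M = transvection i j x →
          Matrix.SpecialLinearGroup.transvection hij x ∈ K := by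
        intro g M i j hij x hg h1 h2
        have : g = Matrix.SpecialLinearGroup.transvection hij x := Subtype.ext (h1.trans h2)
        exact this ▸ hg
      apply top_of_four T hF K
      · refine tr (a * bz * a * bz * az * b) _ _ _ _ _ ?_ w0 ?_
        · repeat' first | assumption | apply K.mul_mem
        · ext i j; fin_cases i <;> fin_cases j <;> simp [transvection]
      · refine tr (bz * az * bz * a * b * az * b * b) _ _ _ _ _ ?_ w1 ?_
        · repeat' first | assumption | apply K.mul_mem
        · ext i j; fin_cases i <;> fin_cases j <;> simp [transvection]
      · refine tr (b * az * b * az * bz * a) _ _ _ _ _ ?_ w2 ?_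
        · repeat' first | assumption | apply K.mul_mem
        · ext i j; fin_cases i <;> fin_cases j <;> simp [transvection]
      · refine tr (a * a * bz * a * b * b * az * b * a) _ _ _ _ _ ?_ w3 ?_
        · repeat' first | assumption | apply K.mul_mem
        · ext i j; fin_cases i <;> fin_cases j <;> simp [transvection]
    rw [eq_top_iff]
    intro q _
    obtain ⟨g, rfl⟩ := QuotientGroup.mk_surjective q
    have : g ∈ K := hK ▸ Subgroup.mem_top g
    exact this

end

theorem exists_omega : ∃ w : GaloisField 2 2, w ^ 2 = w + 1 ∧
    ∀ x : GaloisField 2 2, x = 0 ∨ x = 1 ∨ x = w ∨ x = w + 1 := by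
  have h2 : (2 : GaloisField 2 2) = 0 := CharTwo.two_eq_zero
  have hcard : Nat.card (GaloisField 2 2) = 4 := GaloisField.card 2 2 (by norm_num)
  have : Finite (GaloisField 2 2) := Nat.finite_of_card_ne_zero (by omega)
  have := Fintype.ofFinite (GaloisField 2 2)
  rw [Nat.card_eq_fintype_card] at hcard
  have hx : ∀ x : GaloisField 2 2, x = 0 ∨ x = 1 ∨ x ^ 2 = x + 1 := by
    intro x
    have h4 : x ^ 4 = x := hcard ▸ FiniteField.pow_card x
    have : x * ((x - 1) * (x ^ 2 - (x + 1))) = 0 := by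
      linear_combination h4 - (x ^ 3 - x) * h2
    rcases mul_eq_zero.1 this with h | h
    · exact Or.inl h
    rcases mul_eq_zero.1 h with h | h
    · exact Or.inr (Or.inl (sub_eq_zero.1 h))
    · exact Or.inr (Or.inr (sub_eq_zero.1 h))
  have hex : ∃ w : GaloisField 2 2, w ≠ 0 ∧ w ≠ 1 := by
    classical
    by_contra! hcon
    have : (Finset.univ : Finset (GaloisField 2 2)) ⊆ {0, 1} := by
      intro x _
      by_cases h : x = 0
      · simp [h]
      · simp [hcon x h]
    have h3 := Finset.card_le_card this
    have h5 := Finset.card_le_two (a := (0 : GaloisField 2 2)) (b := 1)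
    rw [Finset.card_univ, hcard] at h3
    omega
  obtain ⟨w, hw0, hw1⟩ := hex
  have hw : w ^ 2 = w + 1 := by simpa [hw0, hw1] using hx w
  refine ⟨w, hw, fun x => ?_⟩
  rcases hx x with h | h | h
  · exact Or.inl h
  · exact Or.inr (Or.inl h)
  · right; right
    have : (x - w) * (x - (w + 1)) = 0 := by
      linear_combination h + hw - (x * w - w - 1) * h2
    rcases mul_eq_zero.1 this with h | h
    · exact Or.inl (sub_eq_zero.1 h)
    · exact Or.inr (sub_eq_zero.1 h)

end PSL34

theorem stmt13 : ∃ a b c : ProjectiveSpecialLinearGroup (Fin 3) (GaloisField 2 2),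
    orderOf a = 5 ∧ orderOf b = 5 ∧ orderOf c = 7 ∧ a * b * c = 1 ∧
      Subgroup.closure
        ({a, b, c} : Set (ProjectiveSpecialLinearGroup (Fin 3) (GaloisField 2 2))) = ⊤ := by
  obtain ⟨w, hw, hF⟩ := PSL34.exists_omega
  exact PSL34.main (PSL34.mk_table CharTwo.two_eq_zero hw) hF
end
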